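/- Let b ∈ ℝ, c < 0, and let m1 > 0 be real. There exist constants C > 0 and δ > 0 such that for all real q with 0 < q < δ, the gap lengths of the operator with potential v(x) = b·q^{m1}·cos 2x + c·q^{2m1}·cos 4x satisfy |γ_1(q) − |b|·q^{m1}| ≤ C·q^{3m1} and |γ_2(q) − |c + b²/8|·q^{2m1}| ≤ C·q^{4m1}. -/

import Mathlib

/-
For the potential `2B cos 2x + 2D cos 4x` the Fourier coefficients of an eigenfunction satisfy
`(n² - λ) aₙ + B (aₙ₋₂ + aₙ₊₂) + D (aₙ₋₄ + aₙ₊₄) = 0`, and the cosine and sine coefficients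
decouple. For small `B` and `D` a mode near `n = j` is dominated by its `j`-th entry. Normalising
`a_j = 1` turns the recurrence into a fixed-point problem for a contraction, so each parity
contributes exactly one eigenvalue near `j²`, and the `j`-th gap is the distance between the even
and the odd one. If `|B| ≤ t` and `|D| ≤ t²`, reading the entries off the recurrence gives
`λ = 1 ± B - B²/8 + O(t³)` for `j = 1`, and for `j = 2` the eigenvalues
`4 + 5B²/12 + D + O(t⁴)` (even) and `4 - B²/12 - D + O(t⁴)` (odd), whence the two gap lengths.
-/

open Real

noncomputable section

/-- `f` is a (possibly zero) solution of `-f'' + v f = λ f` that is `π`-periodic. -/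
def IsPerEF (v : ℝ → ℝ) (lam : ℝ) (f : ℝ → ℝ) : Prop :=
  ContDiff ℝ 2 f ∧ (∀ x, -(deriv (deriv f) x) + v x * f x = lam * f x) ∧
    ∀ x, f (x + Real.pi) = f x

/-- `f` is a (possibly zero) solution of `-f'' + v f = λ f` with `f(x+π) = -f(x)`. -/
def IsSemiEF (v : ℝ → ℝ) (lam : ℝ) (f : ℝ → ℝ) : Prop :=
  ContDiff ℝ 2 f ∧ (∀ x, -(deriv (deriv f) x) + v x * f x = lam * f x) ∧
    ∀ x, f (x + Real.pi) = -f x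

/-- Multiplicity of `λ` as a periodic eigenvalue: the dimension of the space of
π-periodic solutions. -/
def perMult (v : ℝ → ℝ) (lam : ℝ) : ℕ :=
  Module.finrank ℝ (Submodule.span ℝ {f : ℝ → ℝ | IsPerEF v lam f})

/-- Multiplicity of `λ` as a semi-periodic eigenvalue. -/
def semiMult (v : ℝ → ℝ) (lam : ℝ) : ℕ :=
  Module.finrank ℝ (Submodule.span ℝ {f : ℝ → ℝ | IsSemiEF v lam f})

/-- `lamP` enumerates the periodic eigenvalues of `-D² + v` in nondecreasing order
with multiplicity (indices `0, 1, 2, …`). -/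
def EnumPer (v : ℝ → ℝ) (lamP : ℕ → ℝ) : Prop :=
  Monotone lamP ∧ (∀ n, ∃ f, f ≠ 0 ∧ IsPerEF v (lamP n) f) ∧
    ∀ lam : ℝ, Nat.card {n : ℕ // lamP n = lam} = perMult v lam

/-- `lamM` enumerates the semi-periodic eigenvalues of `-D² + v` in nondecreasing order
with multiplicity (indices `1, 2, 3, …`). -/
def EnumSemi (v : ℝ → ℝ) (lamM : ℕ → ℝ) : Prop :=
  MonotoneOn lamM {n : ℕ | 1 ≤ n} ∧ (∀ n, 1 ≤ n → ∃ f, f ≠ 0 ∧ IsSemiEF v (lamM n) f) ∧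
    ∀ lam : ℝ, Nat.card {n : ℕ // 1 ≤ n ∧ lamM n = lam} = semiMult v lam

/-- The length of the `n`-th instability interval: `λ_{n+1}^- - λ_n^-` for odd `n`,
`λ_n^+ - λ_{n-1}^+` for even `n`. -/
def gapLen (lamP lamM : ℕ → ℝ) (n : ℕ) : ℝ :=
  if Odd n then lamM (n + 1) - lamM n else lamP n - lamP (n - 1)

namespace Hill

/-- The parity class of a solution: even solutions expand in cosines, odd ones in sines. -/
inductive Parity
  | even
  | odd

namespace Parity

/-- The factor picked up by the Fourier coefficients of this parity under `n ↦ -n`. -/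
def sign : Parity → ℝ
  | even => 1
  | odd => -1

/-- The phase `φ` for which `cos (y - φ)` has this parity in `y`. -/
def phase : Parity → ℝ
  | even => 0
  | odd => π / 2

@[simp] theorem sign_mul_self (p : Parity) : p.sign * p.sign = 1 := by cases p <;> simp [sign]

@[simp] theorem abs_sign (p : Parity) : |p.sign| = 1 := by cases p <;> simp [sign]

theorem cos_neg_sub_phase (p : Parity) (y : ℝ) :
    cos (-y - p.phase) = p.sign * cos (y - p.phase) := by
  cases p <;> simp [sign, phase, cos_sub]

theorem cos_phase_add_phase (p : Parity) : cos (p.phase + p.phase) = p.sign := by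
  cases p <;> simp [sign, phase]

/-- The other parity. -/
def other : Parity → Parity
  | even => odd
  | odd => even

theorem cos_phase_sub_phase_other (p : Parity) : cos (p.phase - p.other.phase) = 0 := by
  cases p <;> simp [phase, other]

theorem cos_phase_add_phase_other (p : Parity) : cos (p.phase + p.other.phase) = 0 := by
  cases p <;> simp [phase, other]

end Parity

/-! ### Fourier coefficients with a phase -/

/-- The unnormalised Fourier coefficient of `f` against `cos (n x - φ)` over `[0, 2π]`. The phases
`0` and `π / 2` give the cosine and sine coefficients; other phases arise by differentiation. -/
def phaseCoeff (φ : ℝ) (f : ℝ → ℝ) (n : ℤ) : ℝ :=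
  ∫ x in (0 : ℝ)..(2 * π), f x * cos (n * x - φ)

section PhaseCoeff

variable {f g : ℝ → ℝ}

theorem intervalIntegrable_mul_cos (hf : Continuous f) (φ : ℝ) (n : ℤ) (a b : ℝ) :
    IntervalIntegrable (fun x => f x * cos (n * x - φ)) MeasureTheory.volume a b :=
  Continuous.intervalIntegrable (by fun_prop) a b

theorem phaseCoeff_add (hf : Continuous f) (hg : Continuous g) (φ : ℝ) (n : ℤ) :
    phaseCoeff φ (fun x => f x + g x) n = phaseCoeff φ f n + phaseCoeff φ g n := by
  simp only [phaseCoeff, add_mul]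
  exact intervalIntegral.integral_add (intervalIntegrable_mul_cos hf φ n _ _)
    (intervalIntegrable_mul_cos hg φ n _ _)

theorem phaseCoeff_const_mul (c φ : ℝ) (f : ℝ → ℝ) (n : ℤ) :
    phaseCoeff φ (fun x => c * f x) n = c * phaseCoeff φ f n := by
  simp only [phaseCoeff, mul_assoc, intervalIntegral.integral_const_mul]

theorem phaseCoeff_neg (p : Parity) (f : ℝ → ℝ) (n : ℤ) :
    phaseCoeff p.phase f (-n) = p.sign * phaseCoeff p.phase f n := by
  simp only [phaseCoeff, Int.cast_neg, neg_mul, p.cos_neg_sub_phase]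
  simp only [mul_left_comm (f _), intervalIntegral.integral_const_mul]

theorem phaseCoeff_add_pi (φ : ℝ) (f : ℝ → ℝ) (n : ℤ) :
    phaseCoeff (φ + π) f n = -phaseCoeff φ f n := by
  simp only [phaseCoeff, ← sub_sub, cos_sub_pi, mul_neg, intervalIntegral.integral_neg]

theorem exists_abs_phaseCoeff_le (hf : Continuous f) (φ : ℝ) :
    ∃ K, ∀ n, |phaseCoeff φ f n| ≤ K := by
  obtain ⟨C, hC⟩ := (isCompact_uIcc (a := (0 : ℝ)) (b := 2 * π)).exists_bound_of_continuousOn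
    hf.continuousOn
  refine ⟨C * |2 * π - 0|, fun n => ?_⟩
  rw [← norm_eq_abs]
  refine intervalIntegral.norm_integral_le_of_norm_le_const fun x hx => ?_
  calc ‖f x * cos (n * x - φ)‖ = ‖f x‖ * |cos (n * x - φ)| := norm_mul _ _
    _ ≤ ‖f x‖ := mul_le_of_le_one_right (norm_nonneg _) (abs_cos_le_one _)
    _ ≤ C := hC x (Set.uIoc_subset_uIcc hx)

theorem hasDerivAt_const_mul_sub (n φ x : ℝ) : HasDerivAt (fun x : ℝ => n * x - φ) n x := by
  simpa using ((hasDerivAt_id x).const_mul n).sub_const φ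

theorem phaseCoeff_deriv (hf : ContDiff ℝ 1 f) (hper : Function.Periodic f (2 * π)) (φ : ℝ)
    (n : ℤ) : phaseCoeff φ (deriv f) n = n * phaseCoeff (φ + π / 2) f n := by
  have hf' : Continuous (deriv f) := hf.continuous_deriv le_rfl
  have hparts := intervalIntegral.integral_deriv_mul_eq_sub (a := 0) (b := 2 * π)
    (u := f) (u' := deriv f) (v := fun x => cos (n * x - φ)) (v' := fun x => -sin (n * x - φ) * n)
    (fun x _ => (hf.differentiable one_ne_zero x).hasDerivAt)
    (fun x _ => (hasDerivAt_const_mul_sub n φ x).cos)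
    (hf'.intervalIntegrable _ _) (Continuous.intervalIntegrable (by fun_prop) _ _)
  have hf0 : f (2 * π) = f 0 := by simpa using hper 0
  have hcos : cos (n * (2 * π) - φ) = cos (n * 0 - φ) := by
    rw [show (n : ℝ) * (2 * π) - φ = n * 0 - φ + n * (2 * π) by ring, cos_add_int_mul_two_pi]
  rw [hf0, hcos, sub_self] at hparts
  rw [← sub_eq_zero, ← hparts, phaseCoeff, phaseCoeff, ← intervalIntegral.integral_const_mul,
    ← intervalIntegral.integral_sub (intervalIntegrable_mul_cos hf' φ n _ _)
      ((intervalIntegrable_mul_cos hf.continuous _ n _ _).const_mul _)]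
  refine intervalIntegral.integral_congr fun x _ => ?_
  simp only [← sub_sub, cos_sub_pi_div_two]
  ring

theorem periodic_deriv {T : ℝ} (hper : Function.Periodic f T) : Function.Periodic (deriv f) T := by
  intro x
  rw [← deriv_comp_add_const, funext hper]

theorem phaseCoeff_deriv_deriv (hf : ContDiff ℝ 2 f) (hper : Function.Periodic f (2 * π)) (φ : ℝ)
    (n : ℤ) : phaseCoeff φ (deriv (deriv f)) n = -(n : ℝ) ^ 2 * phaseCoeff φ f n := by
  have hf' : ContDiff ℝ 1 (deriv f) := (contDiff_succ_iff_deriv.1 hf).2.2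
  rw [phaseCoeff_deriv hf' (periodic_deriv hper), phaseCoeff_deriv (hf.of_le one_le_two) hper,
    add_assoc, add_halves, phaseCoeff_add_pi]
  ring

theorem two_mul_cos_mul_cos_sub (k n : ℤ) (φ x : ℝ) : 2 * cos (k * x) * cos (n * x - φ) =
    cos ((n - k : ℤ) * x - φ) + cos ((n + k : ℤ) * x - φ) := by
  rw [two_mul_cos_mul_cos, ← cos_neg]
  push_cast
  ring_nf

theorem phaseCoeff_two_mul_cos_mul (hf : Continuous f) (k : ℤ) (φ : ℝ) (n : ℤ) :
    phaseCoeff φ (fun x => 2 * cos (k * x) * f x) n =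
      phaseCoeff φ f (n - k) + phaseCoeff φ f (n + k) := by
  simp only [phaseCoeff]
  rw [← intervalIntegral.integral_add (intervalIntegrable_mul_cos hf φ _ _ _)
    (intervalIntegrable_mul_cos hf φ _ _ _)]
  refine intervalIntegral.integral_congr fun x _ => ?_
  linear_combination f x * two_mul_cos_mul_cos_sub k n φ x

theorem phaseCoeff_eq_zero_of_add_pi {s : ℝ} (hf : Continuous f) (hs : ∀ x, f (x + π) = s * f x)
    {n : ℤ} (hn : s * (-1) ^ n = -1) (φ : ℝ) : phaseCoeff φ f n = 0 := by
  have hshift (x : ℝ) :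
      f (x + π) * cos (n * (x + π) - φ) = -(f x * cos (n * x - φ)) := by
    rw [hs, show (n : ℝ) * (x + π) - φ = n * x - φ + n * π by ring, cos_add_int_mul_pi]
    linear_combination f x * cos (n * x - φ) * hn
  have hhalf := intervalIntegral.integral_comp_add_right (a := 0) (b := π)
    (fun x => f x * cos (n * x - φ)) π
  simp only [hshift, intervalIntegral.integral_neg, zero_add, ← two_mul] at hhalf
  rw [phaseCoeff, ← intervalIntegral.integral_add_adjacent_intervals
    (intervalIntegrable_mul_cos hf φ n 0 π) (intervalIntegrable_mul_cos hf φ n π (2 * π)),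
    ← hhalf, add_neg_cancel]

theorem integral_cos_int_mul_sub (k : ℤ) (θ : ℝ) :
    ∫ x in (0 : ℝ)..(2 * π), cos (k * x - θ) = if k = 0 then 2 * π * cos θ else 0 := by
  split_ifs with hk
  · simp [hk]
  · have hk' : (k : ℝ) ≠ 0 := Int.cast_ne_zero.2 hk
    rw [intervalIntegral.integral_comp_mul_sub _ hk', integral_cos,
      show (k : ℝ) * (2 * π) - θ = k * 0 - θ + k * (2 * π) by ring, sin_add_int_mul_two_pi,
      sub_self, smul_zero]

theorem phaseCoeff_cos (n j : ℤ) (φ ψ : ℝ) : phaseCoeff ψ (fun x => cos (n * x - φ)) j =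
    (if n = j then π * cos (φ - ψ) else 0) + (if n = -j then π * cos (φ + ψ) else 0) := by
  have hprod (x : ℝ) : cos (n * x - φ) * cos (j * x - ψ) =
      1 / 2 * cos ((n - j : ℤ) * x - (φ - ψ)) + 1 / 2 * cos ((n + j : ℤ) * x - (φ + ψ)) := by
    have h := two_mul_cos_mul_cos (n * x - φ) (j * x - ψ)
    push_cast
    ring_nf at h ⊢
    linarith
  simp only [phaseCoeff, hprod]
  rw [intervalIntegral.integral_add (Continuous.intervalIntegrable (by fun_prop) _ _)
    (Continuous.intervalIntegrable (by fun_prop) _ _), intervalIntegral.integral_const_mul,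
    intervalIntegral.integral_const_mul, integral_cos_int_mul_sub, integral_cos_int_mul_sub]
  simp only [sub_eq_zero, add_eq_zero_iff_eq_neg]
  split_ifs <;> ring

theorem fourierCoeff_eq_phaseCoeff [Fact (0 < 2 * π)] {g : AddCircle (2 * π) → ℂ}
    (hf : Continuous f) (hg : ∀ x : ℝ, g x = f x) (n : ℤ) :
    fourierCoeff g n =
      (1 / (2 * π) : ℝ) • ((phaseCoeff 0 f n : ℂ) - phaseCoeff (π / 2) f n * Complex.I) := by
  have hterm (x : ℝ) : fourier (T := 2 * π) (-n) (x : AddCircle (2 * π)) • g x =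
      ((f x * cos (n * x - 0) : ℝ) : ℂ) - ((f x * cos (n * x - π / 2) : ℝ) : ℂ) * Complex.I := by
    have harg : (2 * (π : ℂ) * Complex.I * ((-n : ℤ) : ℂ) * x / ((2 * π : ℝ) : ℂ)) =
        ((-(n * x) : ℝ) : ℂ) * Complex.I := by
      have : (π : ℂ) ≠ 0 := Complex.ofReal_ne_zero.2 pi_ne_zero
      push_cast
      field_simp
    rw [fourier_coe_apply, harg, hg, Complex.exp_mul_I, cos_sub_pi_div_two, sub_zero,
      ← Complex.ofReal_cos, ← Complex.ofReal_sin, cos_neg, sin_neg, smul_eq_mul]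
    push_cast
    ring
  simp only [fourierCoeff_eq_intervalIntegral _ _ 0, hterm, zero_add]
  rw [intervalIntegral.integral_sub, intervalIntegral.integral_mul_const,
    intervalIntegral.integral_ofReal, intervalIntegral.integral_ofReal, phaseCoeff, phaseCoeff]
  all_goals exact Continuous.intervalIntegrable (by fun_prop) _ _

theorem eq_zero_of_phaseCoeff_eq_zero (hf : Continuous f) (hper : Function.Periodic f (2 * π))
    (h : ∀ (p : Parity) (n : ℤ), phaseCoeff p.phase f n = 0) : f = 0 := by
  have : Fact (0 < 2 * π) := ⟨two_pi_pos⟩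
  have hper' : Function.Periodic (fun x => (f x : ℂ)) (2 * π) := hper.comp Complex.ofReal
  let g : C(AddCircle (2 * π), ℂ) :=
    ⟨hper'.lift, continuous_coinduced_dom.2 (Complex.continuous_ofReal.comp hf)⟩
  have hg (x : ℝ) : g x = f x := rfl
  have hzero : fourierCoeff g = 0 := funext fun n => by
    have heven : phaseCoeff 0 f n = 0 := h .even n
    have hodd : phaseCoeff (π / 2) f n = 0 := h .odd n
    rw [fourierCoeff_eq_phaseCoeff hf hg, heven, hodd]
    simp
  funext x
  have hsum := has_pointwise_sum_fourier_series_of_summable (f := g)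
    (by rw [hzero]; exact summable_zero) (x : AddCircle (2 * π))
  simp only [hzero, Pi.zero_apply, zero_smul] at hsum
  exact Complex.ofReal_eq_zero.1 ((hg x).symm.trans (hsum.unique hasSum_zero))

end PhaseCoeff

/-! ### Trigonometric series with a phase -/

/-- The sum over `n : ℤ` of `a n * cos (n x - φ)`, the synthesis counterpart of `phaseCoeff`. -/
def phaseSeries (φ : ℝ) (a : ℤ → ℝ) (x : ℝ) : ℝ := ∑' n : ℤ, a n * cos (n * x - φ)

section PhaseSeries

variable {a b : ℤ → ℝ}

theorem norm_mul_cos_le (r y : ℝ) : ‖r * cos y‖ ≤ |r| := by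
  rw [norm_mul]
  exact mul_le_of_le_one_right (abs_nonneg r) (abs_cos_le_one y)

theorem summable_mul_cos (ha : Summable a) (φ x : ℝ) :
    Summable fun n : ℤ => a n * cos (n * x - φ) :=
  .of_norm_bounded ha.abs fun _ => norm_mul_cos_le _ _

theorem phaseSeries_add (ha : Summable a) (hb : Summable b) (φ x : ℝ) :
    phaseSeries φ (fun n => a n + b n) x = phaseSeries φ a x + phaseSeries φ b x := by
  simp only [phaseSeries, add_mul]
  exact (summable_mul_cos ha φ x).tsum_add (summable_mul_cos hb φ x)

theorem phaseSeries_const_mul (c φ : ℝ) (a : ℤ → ℝ) (x : ℝ) :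
    phaseSeries φ (fun n => c * a n) x = c * phaseSeries φ a x := by
  simp only [phaseSeries, mul_assoc, tsum_mul_left]

theorem continuous_phaseSeries (ha : Summable a) (φ : ℝ) : Continuous (phaseSeries φ a) :=
  continuous_tsum (fun _ => by fun_prop) ha.abs fun _ _ => norm_mul_cos_le _ _

theorem hasDerivAt_phaseSeries (ha : Summable a) (ha' : Summable fun n : ℤ => n * a n) (φ x : ℝ) :
    HasDerivAt (phaseSeries φ a) (phaseSeries (φ - π / 2) (fun n => n * a n) x) x := by
  have hterm (n : ℤ) (y : ℝ) : HasDerivAt (fun y => a n * cos (n * y - φ))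
      (n * a n * cos (n * y - (φ - π / 2))) y := by
    refine ((hasDerivAt_const_mul_sub n φ y).cos.const_mul (a n)).congr_deriv ?_
    rw [← sub_add, cos_add_pi_div_two]
    ring
  exact hasDerivAt_tsum (y₀ := 0) ha'.abs hterm (fun _ _ => norm_mul_cos_le _ _)
    (summable_mul_cos ha φ 0) x

theorem deriv_phaseSeries (ha : Summable a) (ha' : Summable fun n : ℤ => n * a n) (φ : ℝ) :
    deriv (phaseSeries φ a) = phaseSeries (φ - π / 2) fun n => n * a n :=
  funext fun x => (hasDerivAt_phaseSeries ha ha' φ x).deriv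

theorem phaseSeries_sub_pi (φ : ℝ) (a : ℤ → ℝ) (x : ℝ) :
    phaseSeries (φ - π) a x = phaseSeries φ (fun n => -a n) x := by
  simp only [phaseSeries, ← sub_add, cos_add_pi, mul_neg, neg_mul]

theorem contDiff_one_phaseSeries (ha : Summable a) (ha' : Summable fun n : ℤ => n * a n) (φ : ℝ) :
    ContDiff ℝ 1 (phaseSeries φ a) := by
  refine contDiff_one_iff_deriv.2
    ⟨fun x => (hasDerivAt_phaseSeries ha ha' φ x).differentiableAt, ?_⟩
  rw [deriv_phaseSeries ha ha']
  exact continuous_phaseSeries ha' _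

theorem summable_int_mul (ha : Summable a) (ha'' : Summable fun n : ℤ => (n : ℝ) ^ 2 * a n) :
    Summable fun n : ℤ => n * a n := by
  refine .of_norm_bounded (ha.abs.add ha''.abs) fun n => ?_
  rw [norm_mul, norm_eq_abs, norm_eq_abs, abs_mul, abs_pow]
  nlinarith [abs_nonneg (a n), sq_nonneg (|(n : ℝ)| - 1)]

theorem contDiff_two_phaseSeries (ha : Summable a)
    (ha'' : Summable fun n : ℤ => (n : ℝ) ^ 2 * a n) (φ : ℝ) : ContDiff ℝ 2 (phaseSeries φ a) := by
  have ha' := summable_int_mul ha ha''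
  rw [← one_add_one_eq_two, contDiff_succ_iff_deriv]
  refine ⟨(contDiff_one_phaseSeries ha ha' φ).differentiable one_ne_zero, by simp, ?_⟩
  rw [deriv_phaseSeries ha ha']
  exact contDiff_one_phaseSeries ha' (ha''.congr fun n => by ring) _

theorem deriv_deriv_phaseSeries (ha : Summable a)
    (ha'' : Summable fun n : ℤ => (n : ℝ) ^ 2 * a n) (φ x : ℝ) :
    deriv (deriv (phaseSeries φ a)) x = phaseSeries φ (fun n => -(n : ℝ) ^ 2 * a n) x := by
  have ha' := summable_int_mul ha ha''
  rw [deriv_phaseSeries ha ha', deriv_phaseSeries ha' (ha''.congr fun n => by ring), sub_sub,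
    add_halves, phaseSeries_sub_pi]
  congr 1
  funext n
  ring

theorem phaseSeries_shift (a : ℤ → ℝ) (k : ℤ) (φ x : ℝ) :
    phaseSeries φ (fun n => a (n + k)) x = ∑' n : ℤ, a n * cos ((n - k : ℤ) * x - φ) := by
  rw [← (Equiv.addRight k).tsum_eq]
  simp [phaseSeries]

theorem two_mul_cos_mul_phaseSeries (ha : Summable a) (k : ℤ) (φ x : ℝ) :
    2 * cos (k * x) * phaseSeries φ a x = phaseSeries φ (fun n => a (n - k) + a (n + k)) x := by
  have hshift (m : ℤ) : Summable fun n => a (n + m) := ha.comp_injective (add_left_injective m)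
  have hsum (m : ℤ) : Summable fun n : ℤ => a n * cos ((n - m : ℤ) * x - φ) :=
    .of_norm_bounded ha.abs fun _ => norm_mul_cos_le _ _
  simp only [sub_eq_add_neg _ k]
  rw [phaseSeries_add (hshift (-k)) (hshift k), phaseSeries_shift, phaseSeries_shift, phaseSeries,
    ← tsum_mul_left, ← (hsum (-k)).tsum_add (hsum k)]
  refine tsum_congr fun n => ?_
  rw [sub_neg_eq_add]
  linear_combination a n * two_mul_cos_mul_cos_sub k n φ x

theorem phaseSeries_add_pi {j : ℤ} (hodd : ∀ n, Odd (n - j) → a n = 0) (φ x : ℝ) :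
    phaseSeries φ a (x + π) = (-1) ^ j * phaseSeries φ a x := by
  rw [phaseSeries, phaseSeries, ← tsum_mul_left]
  refine tsum_congr fun n => ?_
  rcases Int.even_or_odd (n - j) with hn | hn
  · have hsign : (-1 : ℝ) ^ n = (-1) ^ j := by
      rw [← sub_add_cancel n j, zpow_add₀ (by norm_num), hn.neg_one_zpow, one_mul]
    rw [show (n : ℝ) * (x + π) - φ = n * x - φ + n * π by ring, cos_add_int_mul_pi, hsign]
    ring
  · simp [hodd n hn]

theorem phaseCoeff_phaseSeries (ha : Summable a) (φ ψ : ℝ) (j : ℤ) :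
    phaseCoeff ψ (phaseSeries φ a) j =
      π * (a j * cos (φ - ψ) + a (-j) * cos (φ + ψ)) := by
  have hterms : HasSum (fun n : ℤ => a n * phaseCoeff ψ (fun x => cos (n * x - φ)) j)
      (phaseCoeff ψ (phaseSeries φ a) j) := by
    simp only [← phaseCoeff_const_mul]
    refine intervalIntegral.hasSum_integral_of_dominated_convergence (fun n _ => |a n|)
      (fun n => Continuous.aestronglyMeasurable (by fun_prop)) (fun n => .of_forall fun x _ => ?_)
      (.of_forall fun _ _ => ha.abs) intervalIntegrable_const (.of_forall fun x _ => ?_)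
    · rw [mul_assoc, norm_mul]
      exact mul_le_of_le_one_right (abs_nonneg _)
        ((norm_mul_cos_le _ _).trans (abs_cos_le_one _))
    · exact (summable_mul_cos ha φ x).hasSum.mul_right _
  refine hterms.unique ?_
  simp only [phaseCoeff_cos, mul_add, mul_ite, mul_zero]
  convert (hasSum_ite_eq j (a j * (π * cos (φ - ψ)))).add
    (hasSum_ite_eq (-j) (a (-j) * (π * cos (φ + ψ)))) using 1
  · funext n
    split_ifs <;> simp_all
  · ring

end PhaseSeries

/-! ### Modes: bounded solutions of the recurrence for the Fourier coefficients -/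

/-- The potential `2B cos 2x + 2D cos 4x`. -/
def twoHarmonic (B D x : ℝ) : ℝ := 2 * B * cos (2 * x) + 2 * D * cos (4 * x)

/-- Multiplication by `twoHarmonic B D`, transported to Fourier coefficients. -/
def potentialAction (B D : ℝ) (a : ℤ → ℝ) (n : ℤ) : ℝ :=
  B * (a (n - 2) + a (n + 2)) + D * (a (n - 4) + a (n + 4))

section PotentialAction

variable {B D K s : ℝ} {a b : ℤ → ℝ} {j : ℤ}

theorem continuous_twoHarmonic : Continuous (twoHarmonic B D) := by
  unfold twoHarmonic
  fun_prop

theorem twoHarmonic_mul (B D x y : ℝ) : twoHarmonic B D x * y =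
    B * (2 * cos ((2 : ℤ) * x) * y) + D * (2 * cos ((4 : ℤ) * x) * y) := by
  simp only [twoHarmonic, Int.cast_ofNat]
  ring

theorem phaseCoeff_twoHarmonic_mul {f : ℝ → ℝ} (hf : Continuous f) (φ : ℝ) (n : ℤ) :
    phaseCoeff φ (fun x => twoHarmonic B D x * f x) n = potentialAction B D (phaseCoeff φ f) n := by
  simp only [twoHarmonic_mul]
  rw [phaseCoeff_add (by fun_prop) (by fun_prop), phaseCoeff_const_mul, phaseCoeff_const_mul,
    phaseCoeff_two_mul_cos_mul hf, phaseCoeff_two_mul_cos_mul hf, potentialAction]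

theorem twoHarmonic_mul_phaseSeries (ha : Summable a) (φ x : ℝ) :
    twoHarmonic B D x * phaseSeries φ a x = phaseSeries φ (potentialAction B D a) x := by
  have hshift (k : ℤ) : Summable fun n => a (n - k) + a (n + k) :=
    (ha.comp_injective (sub_left_injective (b := k))).add (ha.comp_injective (add_left_injective k))
  unfold potentialAction
  rw [twoHarmonic_mul, two_mul_cos_mul_phaseSeries ha, two_mul_cos_mul_phaseSeries ha,
    phaseSeries_add ((hshift 2).mul_left B) ((hshift 4).mul_left D), phaseSeries_const_mul,
    phaseSeries_const_mul]

theorem potentialAction_sub (B D : ℝ) (a b : ℤ → ℝ) (n : ℤ) :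
    potentialAction B D (fun k => a k - b k) n =
      potentialAction B D a n - potentialAction B D b n := by
  unfold potentialAction
  ring

theorem potentialAction_div_const (B D : ℝ) (a : ℤ → ℝ) (c : ℝ) (n : ℤ) :
    potentialAction B D (fun k => a k / c) n = potentialAction B D a n / c := by
  unfold potentialAction
  ring

theorem abs_potentialAction_le_of_near {n : ℤ} (h : ∀ m, |m - n| ≤ 4 → |a m| ≤ K) :
    |potentialAction B D a n| ≤ 2 * (|B| + |D|) * K := by
  have hpair (r : ℝ) (k l : ℤ) (hk : |k - n| ≤ 4) (hl : |l - n| ≤ 4) :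
      |r * (a k + a l)| ≤ |r| * (K + K) := by
    rw [abs_mul]
    exact mul_le_mul_of_nonneg_left ((abs_add_le _ _).trans (add_le_add (h k hk) (h l hl)))
      (abs_nonneg r)
  calc |potentialAction B D a n| ≤ |B| * (K + K) + |D| * (K + K) :=
        (abs_add_le _ _).trans (add_le_add (hpair B _ _ (by simp) (by simp))
          (hpair D _ _ (by simp) (by simp)))
    _ = 2 * (|B| + |D|) * K := by ring

theorem abs_potentialAction_le (h : ∀ n, |a n| ≤ K) (n : ℤ) :
    |potentialAction B D a n| ≤ 2 * (|B| + |D|) * K :=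
  abs_potentialAction_le_of_near fun m _ => h m

theorem potentialAction_neg_apply (h : ∀ n, a (-n) = s * a n) (n : ℤ) :
    potentialAction B D a (-n) = s * potentialAction B D a n := by
  unfold potentialAction
  rw [show -n - 2 = -(n + 2) by ring, show -n + 2 = -(n - 2) by ring,
    show -n - 4 = -(n + 4) by ring, show -n + 4 = -(n - 4) by ring, h, h, h, h]
  ring

theorem potentialAction_eq_zero_of_odd (h : ∀ n, Odd (n - j) → a n = 0) {n : ℤ}
    (hn : Odd (n - j)) : potentialAction B D a n = 0 := by
  have hshift (k : ℤ) (hk : Even k) : a (n + k) = 0 :=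
    h _ (by rw [add_sub_right_comm]; exact hn.add_even hk)
  unfold potentialAction
  rw [sub_eq_add_neg, sub_eq_add_neg, hshift _ (by decide), hshift _ (by decide),
    hshift _ (by decide), hshift _ (by decide)]
  ring

end PotentialAction

/-- The shape of the Fourier coefficients of parity `p` of a function `f` with
`f (x + π) = (-1) ^ j * f x`. -/
structure HasShape (p : Parity) (j : ℤ) (a : ℤ → ℝ) : Prop where
  neg : ∀ n, a (-n) = p.sign * a n
  eq_zero : ∀ n, Odd (n - j) → a n = 0

/-- A mode: a bounded sequence satisfying the recurrence to which the equation
`-f'' + twoHarmonic B D * f = lam * f` reduces on Fourier coefficients of parity `p`. -/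
structure IsMode (B D : ℝ) (p : Parity) (j : ℤ) (lam : ℝ) (a : ℤ → ℝ) : Prop
    extends HasShape p j a where
  bounded : ∃ K, ∀ n, |a n| ≤ K
  recurrence : ∀ n : ℤ, ((n : ℝ) ^ 2 - lam) * a n + potentialAction B D a n = 0

/-- A mode whose largest coefficient is the `j`-th one, normalised to be `1`. -/
structure IsNormalizedMode (B D : ℝ) (p : Parity) (j : ℤ) (lam : ℝ) (a : ℤ → ℝ) : Prop
    extends IsMode B D p j lam a where
  abs_le_one : ∀ n, |a n| ≤ 1
  apply_self : a j = 1

/-- The index pair `{j, -j}` is the only one of its class mod 2 whose free eigenvalue `n²` can be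
within distance `1` of `lam`. -/
def Nonresonant (j : ℤ) (lam : ℝ) : Prop :=
  ∀ n : ℤ, Even (n - j) → n ≠ j → n ≠ -j → 1 ≤ |(n : ℝ) ^ 2 - lam|

theorem forall_abs_le_of_forall_le_max {ι : Type*} [Nonempty ι] {a : ι → ℝ} {r : ℝ} (hr : 0 ≤ r)
    (hbdd : ∃ K, ∀ n, |a n| ≤ K)
    (himp : ∀ K, (∀ n, |a n| ≤ K) → ∀ n, |a n| ≤ max r (K / 2)) (n : ι) : |a n| ≤ r := by
  obtain ⟨K, hK⟩ := hbdd
  have hle (n : ι) : |a n| ≤ ⨆ n, |a n| := le_ciSup ⟨K, Set.forall_mem_range.2 hK⟩ n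
  rcases le_max_iff.1 (ciSup_le (himp _ hle)) with h | h
  · exact (hle n).trans h
  · linarith [hle n]

theorem abs_le_of_mul_add_eq_zero {g x y : ℝ} (hg : 1 ≤ |g|) (h : g * x + y = 0) : |x| ≤ |y| := by
  rw [← neg_eq_of_add_eq_zero_right h, abs_neg, abs_mul]
  exact le_mul_of_one_le_left (abs_nonneg x) hg

section Mode

variable {B D lam : ℝ} {p : Parity} {j : ℤ} {a : ℤ → ℝ}

theorem HasShape.abs_neg (h : HasShape p j a) (n : ℤ) : |a (-n)| = |a n| := by
  rw [h.neg, abs_mul, p.abs_sign, one_mul]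

namespace IsMode

theorem abs_le_apply_self (h : IsMode B D p j lam a) (hres : Nonresonant j lam)
    (hBD : |B| + |D| ≤ 1 / 12) (n : ℤ) : |a n| ≤ |a j| := by
  refine forall_abs_le_of_forall_le_max (abs_nonneg _) h.bounded (fun K hK n => ?_) n
  rcases Int.even_or_odd (n - j) with hn | hn
  · rcases eq_or_ne n j with rfl | h1
    · exact le_max_left _ _
    rcases eq_or_ne n (-j) with rfl | h2
    · rw [h.abs_neg]
      exact le_max_left _ _
    have hK0 : 0 ≤ K := (abs_nonneg _).trans (hK 0)
    calc |a n| ≤ |potentialAction B D a n| :=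
          abs_le_of_mul_add_eq_zero (hres n hn h1 h2) (h.recurrence n)
      _ ≤ 2 * (|B| + |D|) * K := abs_potentialAction_le hK n
      _ ≤ K / 2 := by nlinarith
      _ ≤ _ := le_max_right _ _
  · rw [h.eq_zero n hn, abs_zero]
    exact le_max_of_le_left (abs_nonneg _)

theorem eq_zero_of_apply_self (h : IsMode B D p j lam a) (hres : Nonresonant j lam)
    (hBD : |B| + |D| ≤ 1 / 12) (hj : a j = 0) (n : ℤ) : a n = 0 :=
  abs_nonpos_iff.1 ((h.abs_le_apply_self hres hBD n).trans_eq (by rw [hj, abs_zero]))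

theorem normalize (h : IsMode B D p j lam a) (hres : Nonresonant j lam) (hBD : |B| + |D| ≤ 1 / 12)
    (hj : a j ≠ 0) : IsNormalizedMode B D p j lam fun n => a n / a j := by
  have hle (n : ℤ) : |a n / a j| ≤ 1 := by
    rw [abs_div]
    exact div_le_one_of_le₀ (h.abs_le_apply_self hres hBD n) (abs_nonneg _)
  refine ⟨⟨⟨fun n => ?_, fun n hn => ?_⟩, ⟨1, hle⟩, fun n => ?_⟩, hle, div_self hj⟩
  · rw [h.neg, mul_div_assoc]
  · rw [h.eq_zero n hn, zero_div]
  · rw [potentialAction_div_const, ← mul_div_assoc, ← add_div, h.recurrence, zero_div]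

end IsMode

end Mode

theorem one_le_abs_sq_sub_sq {n j : ℤ} (h1 : n ≠ j) (h2 : n ≠ -j) :
    (1 : ℝ) ≤ |(n : ℝ) ^ 2 - (j : ℝ) ^ 2| := by
  have hne : n ^ 2 - j ^ 2 ≠ 0 := sub_ne_zero.2 fun h => (sq_eq_sq_iff_eq_or_eq_neg.1 h).elim h1 h2
  exact_mod_cast Int.one_le_abs hne

/-! ### Each parity has exactly one eigenvalue near `j²` -/

/-- The map whose fixed points of the right shape are the normalised modes: it solves the recurrence
for the coefficients off `{j, -j}`, with `lam` eliminated through the equation at `n = j`. -/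
def modeMap (B D : ℝ) (p : Parity) (j : ℤ) (a : ℤ → ℝ) (n : ℤ) : ℝ :=
  if n = j then 1 else if n = -j then p.sign else
    (potentialAction B D a j * a n - potentialAction B D a n) / ((n : ℝ) ^ 2 - (j : ℝ) ^ 2)

section ModeMap

variable {B D lam lam' : ℝ} {p : Parity} {j : ℤ} {a b : ℤ → ℝ}

theorem abs_modeMap_le_one (hBD : |B| + |D| ≤ 1 / 12) (ha : ∀ n, |a n| ≤ 1) (n : ℤ) :
    |modeMap B D p j a n| ≤ 1 := by
  unfold modeMap
  split_ifs with h1 h2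
  · simp
  · simp
  have hact (k : ℤ) := abs_potentialAction_le (B := B) (D := D) ha k
  rw [abs_div]
  refine div_le_one_of_le₀ (le_trans ?_ (one_le_abs_sq_sub_sq h1 h2)) (abs_nonneg _)
  calc |potentialAction B D a j * a n - potentialAction B D a n|
      ≤ |potentialAction B D a j| * |a n| + |potentialAction B D a n| := by
        rw [← abs_mul]
        exact abs_sub _ _
    _ ≤ 2 * (|B| + |D|) * 1 * 1 + 2 * (|B| + |D|) * 1 := by
        gcongr
        exacts [hact j, ha n, hact n]
    _ ≤ 1 := by linarith

theorem HasShape.modeMap (h : HasShape p j a) (hj : j = 0 → p = .even) :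
    HasShape p j (modeMap B D p j a) where
  neg n := by
    unfold Hill.modeMap
    rcases eq_or_ne n j with rfl | h1
    · rcases eq_or_ne n 0 with rfl | h0
      · simp [hj rfl, Parity.sign]
      · simp [show -n ≠ n by omega]
    rcases eq_or_ne n (-j) with rfl | h2
    · simp [h1]
    · rw [if_neg (by rwa [neg_eq_iff_eq_neg]), if_neg (by rwa [neg_inj]), if_neg h1, if_neg h2,
        potentialAction_neg_apply h.neg, h.neg, Int.cast_neg, neg_sq]
      ring
  eq_zero n hn := by
    have h1 : n ≠ j := by
      rintro rfl
      simp at hn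
    have h2 : n ≠ -j := by
      rintro rfl
      exact Int.not_odd_iff_even.2 ⟨-j, by ring⟩ hn
    simp [Hill.modeMap, h1, h2, h.eq_zero n hn, potentialAction_eq_zero_of_odd h.eq_zero hn]

theorem abs_modeMap_sub_le (hBD : |B| + |D| ≤ 1 / 12) (ha : ∀ n, |a n| ≤ 1) (hb : ∀ n, |b n| ≤ 1)
    {K : ℝ} (hab : ∀ n, |a n - b n| ≤ K) (n : ℤ) :
    |modeMap B D p j a n - modeMap B D p j b n| ≤ K / 2 := by
  have hK : 0 ≤ K := (abs_nonneg _).trans (hab 0)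
  unfold modeMap
  split_ifs with h1 h2
  · simpa using by positivity
  · simpa using by positivity
  have hsub (k : ℤ) := abs_potentialAction_le (B := B) (D := D) hab k
  simp only [potentialAction_sub] at hsub
  rw [← sub_div, abs_div]
  refine div_le_of_le_mul₀ (abs_nonneg _) (by positivity)
    (le_trans ?_ (le_mul_of_one_le_right (by positivity) (one_le_abs_sq_sub_sq h1 h2)))
  calc _ = |(potentialAction B D a j - potentialAction B D b j) * a n +
        potentialAction B D b j * (a n - b n) -
          (potentialAction B D a n - potentialAction B D b n)| := by ring_nf
    _ ≤ |potentialAction B D a j - potentialAction B D b j| * |a n| +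
        |potentialAction B D b j| * |a n - b n| +
          |potentialAction B D a n - potentialAction B D b n| := by
        rw [← abs_mul, ← abs_mul]
        exact (abs_sub _ _).trans (add_le_add_left (abs_add_le _ _) _)
    _ ≤ 2 * (|B| + |D|) * K * 1 + 2 * (|B| + |D|) * 1 * K + 2 * (|B| + |D|) * K := by
        gcongr
        exacts [hsub j, ha n, abs_potentialAction_le hb j, hab n, hsub n]
    _ ≤ K / 2 := by nlinarith

theorem IsNormalizedMode.eigenvalue_eq (h : IsNormalizedMode B D p j lam a) :
    lam = (j : ℝ) ^ 2 + potentialAction B D a j := by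
  have := h.recurrence j
  rw [h.apply_self] at this
  linarith

theorem IsNormalizedMode.modeMap_eq (h : IsNormalizedMode B D p j lam a) :
    modeMap B D p j a = a := by
  funext n
  unfold modeMap
  split_ifs with h1 h2
  · rw [h1, h.apply_self]
  · rw [h2, h.neg, h.apply_self, mul_one]
  have hne : (n : ℝ) ^ 2 - (j : ℝ) ^ 2 ≠ 0 :=
    abs_pos.1 (one_pos.trans_le (one_le_abs_sq_sub_sq h1 h2))
  rw [div_eq_iff hne]
  linear_combination -h.recurrence n - a n * h.eigenvalue_eq

theorem isNormalizedMode_of_modeMap_eq (hle : ∀ n, |a n| ≤ 1) (hshape : HasShape p j a)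
    (hfix : modeMap B D p j a = a) :
    IsNormalizedMode B D p j ((j : ℝ) ^ 2 + potentialAction B D a j) a := by
  have hj : a j = 1 := by rw [← hfix, modeMap, if_pos rfl]
  refine ⟨⟨hshape, ⟨1, hle⟩, fun n => ?_⟩, hle, hj⟩
  rcases eq_or_ne n j with rfl | h1
  · rw [hj]
    ring
  rcases eq_or_ne n (-j) with rfl | h2
  · rw [potentialAction_neg_apply hshape.neg, hshape.neg, hj]
    push_cast
    ring
  have hne : (n : ℝ) ^ 2 - (j : ℝ) ^ 2 ≠ 0 :=
    abs_pos.1 (one_pos.trans_le (one_le_abs_sq_sub_sq h1 h2))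
  have hn := congrFun hfix n
  rw [modeMap, if_neg h1, if_neg h2, div_eq_iff hne] at hn
  linear_combination -hn

open BoundedContinuousFunction in
/-- The complete metric space on which `modeMap` is a contraction. -/
def modeSpace (p : Parity) (j : ℤ) : Set (ℤ →ᵇ ℝ) := {a | (∀ n, |a n| ≤ 1) ∧ HasShape p j a}

theorem isClosed_modeSpace (p : Parity) (j : ℤ) : IsClosed (modeSpace p j) := by
  have heval (n : ℤ) : Continuous fun a : BoundedContinuousFunction ℤ ℝ => a n :=
    continuous_eval_const n
  have hset : modeSpace p j = {a | ∀ n, |a n| ≤ 1} ∩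
      ({a | ∀ n, a (-n) = p.sign * a n} ∩ {a | ∀ n, Odd (n - j) → a n = 0}) := by
    ext a
    exact and_congr_right fun _ => ⟨fun h => ⟨h.neg, h.eq_zero⟩, fun h => ⟨h.1, h.2⟩⟩
  simp only [hset, Set.ofPred_forall]
  exact (isClosed_iInter fun n => isClosed_le (heval n).abs continuous_const).inter
    ((isClosed_iInter fun n => isClosed_eq (heval _) ((heval n).const_mul _)).inter
      (isClosed_iInter fun n => isClosed_iInter fun _ => isClosed_eq (heval n) continuous_const))

/-- `modeMap` as a self-map of `modeSpace p j`. -/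
def modeSelfMap (hBD : |B| + |D| ≤ 1 / 12) (hj : j = 0 → p = .even) (a : modeSpace p j) :
    modeSpace p j :=
  ⟨.ofNormedAddCommGroupDiscrete (modeMap B D p j a.1) 1 (abs_modeMap_le_one hBD a.2.1),
    abs_modeMap_le_one hBD a.2.1, a.2.2.modeMap hj⟩

theorem contractingWith_modeSelfMap (hBD : |B| + |D| ≤ 1 / 12) (hj : j = 0 → p = .even) :
    ContractingWith (1 / 2) (modeSelfMap hBD hj) := by
  refine ⟨by norm_num, .of_dist_le_mul fun a b => ?_⟩
  refine (BoundedContinuousFunction.dist_le (by positivity)).2 fun n => ?_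
  have hab (n : ℤ) : |a.1 n - b.1 n| ≤ dist a b :=
    BoundedContinuousFunction.dist_coe_le_dist (f := a.1) (g := b.1) n
  refine (abs_modeMap_sub_le hBD a.2.1 b.2.1 hab n).trans_eq ?_
  push_cast
  ring

/-- `lam` is an eigenvalue near `j²` with an eigenfunction of parity `p`. -/
def HasMode (B D : ℝ) (p : Parity) (j : ℤ) (lam : ℝ) : Prop :=
  ∃ a, IsNormalizedMode B D p j lam a

theorem existsUnique_hasMode (hBD : |B| + |D| ≤ 1 / 12) (hj : j = 0 → p = .even) :
    ∃! lam, HasMode B D p j lam := by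
  have : CompleteSpace (modeSpace p j) := (isClosed_modeSpace p j).completeSpace_coe
  have : Nonempty (modeSpace p j) :=
    ⟨⟨0, fun n => by simp, ⟨fun n => by simp, fun n _ => by simp⟩⟩⟩
  have hcontr := contractingWith_modeSelfMap hBD hj
  set a := hcontr.fixedPoint
  have hfix : modeSelfMap hBD hj a = a := hcontr.fixedPoint_isFixedPt
  refine ⟨_, ⟨_, isNormalizedMode_of_modeMap_eq a.2.1 a.2.2
    (congrArg (fun b : modeSpace p j => (b.1 : ℤ → ℝ)) hfix)⟩, ?_⟩
  rintro lam ⟨b, hb⟩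
  let b' : modeSpace p j :=
    ⟨.ofNormedAddCommGroupDiscrete b 1 hb.abs_le_one, hb.abs_le_one, hb.toHasShape⟩
  have hb' : modeSelfMap hBD hj b' = b' :=
    Subtype.ext (DFunLike.coe_injective hb.modeMap_eq)
  have hba : b = a.1 :=
    congrArg (fun b : modeSpace p j => (b.1 : ℤ → ℝ)) (hcontr.fixedPoint_unique hb')
  rw [hb.eigenvalue_eq, hba]

end ModeMap

/-! ### Decay of modes -/

section Decay

variable {B D lam : ℝ} {p : Parity} {j : ℤ} {a : ℤ → ℝ}

theorem one_add_sq_le_of_near {m n : ℤ} (h : |m - n| ≤ 4) :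
    1 + (n : ℝ) ^ 2 ≤ 33 * (1 + (m : ℝ) ^ 2) := by
  have hd : ((m : ℝ) - n) ^ 2 ≤ 4 ^ 2 := sq_le_sq' (by exact_mod_cast (abs_le.1 h).1)
    (by exact_mod_cast (abs_le.1 h).2)
  nlinarith [sq_nonneg (2 * (m : ℝ) - n)]

theorem one_add_sq_pow_mul_abs_potentialAction_le {C : ℝ} {k : ℕ}
    (hC : ∀ n : ℤ, (1 + (n : ℝ) ^ 2) ^ k * |a n| ≤ C) (n : ℤ) :
    (1 + (n : ℝ) ^ 2) ^ k * |potentialAction B D a n| ≤ 2 * (|B| + |D|) * (33 ^ k * C) := by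
  have hw : 0 < (1 + (n : ℝ) ^ 2) ^ k := by positivity
  have hnear (m : ℤ) (hm : |m - n| ≤ 4) : |a m| ≤ 33 ^ k * C / (1 + (n : ℝ) ^ 2) ^ k := by
    rw [le_div_iff₀' hw]
    calc (1 + (n : ℝ) ^ 2) ^ k * |a m| ≤ (33 * (1 + (m : ℝ) ^ 2)) ^ k * |a m| := by
          gcongr
          exact one_add_sq_le_of_near hm
      _ = 33 ^ k * ((1 + (m : ℝ) ^ 2) ^ k * |a m|) := by rw [mul_pow, mul_assoc]
      _ ≤ 33 ^ k * C := by
          gcongr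
          exact hC m
  rw [← le_div_iff₀' hw, mul_div_assoc]
  exact abs_potentialAction_le_of_near hnear

theorem IsMode.one_add_sq_mul_abs_le (h : IsMode B D p j lam a) (n : ℤ) :
    (1 + (n : ℝ) ^ 2) * |a n| ≤ (1 + |lam|) * |a n| + |potentialAction B D a n| :=
  calc (1 + (n : ℝ) ^ 2) * |a n| = |(1 + (n : ℝ) ^ 2) * a n| := by
        rw [abs_mul, abs_of_pos (a := 1 + (n : ℝ) ^ 2) (by positivity)]
    _ = |(1 + lam) * a n - potentialAction B D a n| := by
        congr 1
        linear_combination h.recurrence n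
    _ ≤ |1 + lam| * |a n| + |potentialAction B D a n| := by
        rw [← abs_mul]
        exact abs_sub _ _
    _ ≤ (1 + |lam|) * |a n| + |potentialAction B D a n| := by
        gcongr
        exact (abs_add_le 1 lam).trans_eq (by rw [abs_one])

theorem IsMode.exists_one_add_sq_pow_mul_abs_le (h : IsMode B D p j lam a) (k : ℕ) :
    ∃ C, ∀ n : ℤ, (1 + (n : ℝ) ^ 2) ^ k * |a n| ≤ C := by
  induction k with
  | zero => simpa using h.bounded
  | succ k ih =>
    obtain ⟨C, hC⟩ := ih
    refine ⟨(1 + |lam|) * C + 2 * (|B| + |D|) * (33 ^ k * C), fun n => ?_⟩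
    calc (1 + (n : ℝ) ^ 2) ^ (k + 1) * |a n|
        = (1 + (n : ℝ) ^ 2) ^ k * ((1 + (n : ℝ) ^ 2) * |a n|) := by ring
      _ ≤ (1 + (n : ℝ) ^ 2) ^ k * ((1 + |lam|) * |a n| + |potentialAction B D a n|) := by
          gcongr
          exact h.one_add_sq_mul_abs_le n
      _ = (1 + |lam|) * ((1 + (n : ℝ) ^ 2) ^ k * |a n|) +
            (1 + (n : ℝ) ^ 2) ^ k * |potentialAction B D a n| := by ring
      _ ≤ _ := add_le_add
          (mul_le_mul_of_nonneg_left (hC n) (by positivity))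
          (one_add_sq_pow_mul_abs_potentialAction_le hC n)

theorem summable_of_one_add_sq_mul_abs_le {C : ℝ} (h : ∀ n : ℤ, (1 + (n : ℝ) ^ 2) * |a n| ≤ C) :
    Summable a := by
  refine .of_norm_bounded_eventually ((Real.summable_one_div_int_pow.2 one_lt_two).mul_left C) ?_
  filter_upwards [Filter.eventually_cofinite_ne 0] with n hn
  have hn' : 0 < (n : ℝ) ^ 2 := by positivity
  rw [mul_one_div, le_div_iff₀' hn', norm_eq_abs]
  linarith [h n, abs_nonneg (a n)]

theorem IsMode.summable (h : IsMode B D p j lam a) : Summable a := by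
  obtain ⟨C, hC⟩ := h.exists_one_add_sq_pow_mul_abs_le 1
  exact summable_of_one_add_sq_mul_abs_le fun n => by simpa using hC n

theorem IsMode.summable_sq_mul (h : IsMode B D p j lam a) :
    Summable fun n : ℤ => (n : ℝ) ^ 2 * a n := by
  obtain ⟨C, hC⟩ := h.exists_one_add_sq_pow_mul_abs_le 2
  refine summable_of_one_add_sq_mul_abs_le fun n => le_trans ?_ (hC n)
  rw [abs_mul, abs_of_nonneg (sq_nonneg _), ← mul_assoc, sq (1 + (n : ℝ) ^ 2)]
  gcongr
  linarith

end Decay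

/-! ### Expansion of the eigenvalues near `1` and `4` -/

section Expansion

theorem abs_mul_le_of_le {x y p r : ℝ} (hx : |x| ≤ p) (hy : |y| ≤ r) : |x * y| ≤ p * r := by
  rw [abs_mul]
  exact mul_le_mul hx hy (abs_nonneg _) ((abs_nonneg _).trans hx)

namespace IsNormalizedMode

variable {B D lam t : ℝ} {p : Parity} {j : ℤ} {a : ℤ → ℝ}

theorem abs_eigenvalue_sub_sq_le (h : IsNormalizedMode B D p j lam a) :
    |lam - (j : ℝ) ^ 2| ≤ 2 * (|B| + |D|) := by
  simpa [h.eigenvalue_eq] using abs_potentialAction_le (B := B) (D := D) h.abs_le_one j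

theorem abs_le_mul_abs_potentialAction (h : IsNormalizedMode B D p j lam a)
    (hBD : |B| + |D| ≤ 1 / 20) {n : ℤ} (h1 : n ≠ j) (h2 : n ≠ -j) :
    |a n| ≤ 10 / 9 * |potentialAction B D a n| := by
  have hgap : 9 / 10 ≤ |(n : ℝ) ^ 2 - lam| := by
    have htri := abs_sub_abs_le_abs_sub ((n : ℝ) ^ 2 - (j : ℝ) ^ 2) (lam - (j : ℝ) ^ 2)
    rw [sub_sub_sub_cancel_right] at htri
    linarith [one_le_abs_sq_sub_sq h1 h2, h.abs_eigenvalue_sub_sq_le]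
  have hrec : |(n : ℝ) ^ 2 - lam| * |a n| = |potentialAction B D a n| := by
    rw [← abs_mul, eq_neg_of_add_eq_zero_left (h.recurrence n), abs_neg]
  nlinarith [abs_nonneg (a n)]

theorem abs_le_three_mul (h : IsNormalizedMode B D p j lam a)
    (hB : |B| ≤ t) (hD : |D| ≤ t ^ 2) (ht : t ≤ 1 / 24) {n : ℤ} (h1 : n ≠ j) (h2 : n ≠ -j) :
    |a n| ≤ 3 * t := by
  have ht0 : 0 ≤ t := (abs_nonneg _).trans hB
  have hact := abs_potentialAction_le (B := B) (D := D) h.abs_le_one n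
  have hle := h.abs_le_mul_abs_potentialAction (by nlinarith) h1 h2
  nlinarith

theorem abs_le_nine_mul_sq (h : IsNormalizedMode B D p j lam a)
    (hB : |B| ≤ t) (hD : |D| ≤ t ^ 2) (ht : t ≤ 1 / 24)
    (hn : ∀ k ∈ ({n - 2, n, n + 2} : Finset ℤ), k ≠ j ∧ k ≠ -j) : |a n| ≤ 9 * t ^ 2 := by
  have ht0 : 0 ≤ t := (abs_nonneg _).trans hB
  have hsmall (k : ℤ) (hk : k ∈ ({n - 2, n, n + 2} : Finset ℤ)) : |a k| ≤ 3 * t :=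
    h.abs_le_three_mul hB hD ht (hn k hk).1 (hn k hk).2
  have hact : |potentialAction B D a n| ≤ t * (3 * t + 3 * t) + t ^ 2 * (1 + 1) :=
    (abs_add_le _ _).trans (add_le_add
      (abs_mul_le_of_le hB ((abs_add_le _ _).trans
        (add_le_add (hsmall _ (by simp)) (hsmall _ (by simp)))))
      (abs_mul_le_of_le hD ((abs_add_le _ _).trans
        (add_le_add (h.abs_le_one _) (h.abs_le_one _)))))
  have hle := h.abs_le_mul_abs_potentialAction (by nlinarith) (hn n (by simp)).1 (hn n (by simp)).2
  nlinarith

theorem abs_eigenvalue_sub_le_of_one (h : IsNormalizedMode B D p 1 lam a)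
    (hB : |B| ≤ t) (hD : |D| ≤ t ^ 2) (ht : t ≤ 1 / 24) :
    |lam - (1 + p.sign * B - B ^ 2 / 8)| ≤ 5 * t ^ 3 := by
  have ht0 : 0 ≤ t := (abs_nonneg _).trans hB
  have hσ : |p.sign| ≤ 1 := p.abs_sign.le
  have ha1 : a 1 = 1 := h.apply_self
  have ha1' : a (-1) = p.sign := by rw [h.neg, ha1, mul_one]
  have ha3' : a (-3) = p.sign * a 3 := h.neg 3
  have h1 := h.recurrence 1
  have h3 := h.recurrence 3
  norm_num [potentialAction, ha1, ha1', ha3'] at h1 h3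
  have hlam : |lam - 1| ≤ 21 / 10 * t := by
    have := h.abs_eigenvalue_sub_sq_le
    norm_num at this
    nlinarith
  have ha3 : |a 3| ≤ 3 * t := h.abs_le_three_mul hB hD ht (by decide) (by decide)
  have ha7 : |a 7| ≤ 3 * t := h.abs_le_three_mul hB hD ht (by decide) (by decide)
  have ha5 : |a 5| ≤ 9 * t ^ 2 := h.abs_le_nine_mul_sq hB hD ht (by decide)
  have hlead : |8 * a 3 + B| ≤ 8 * t ^ 2 := by
    have e1 := abs_le.1 (abs_mul_le_of_le hlam ha3)
    have e2 := abs_le.1 (abs_mul_le_of_le hB ha5)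
    have e3 := abs_le.1 (abs_mul_le_of_le hD hσ)
    have e4 := abs_le.1 (abs_mul_le_of_le hD ha7)
    rw [abs_le]
    constructor <;> nlinarith
  have hexp : lam - (1 + p.sign * B - B ^ 2 / 8) =
      B * (8 * a 3 + B) / 8 + D * (p.sign * a 3) + D * a 5 := by
    linear_combination -h1
  have e1 := abs_le.1 (abs_mul_le_of_le hB hlead)
  have e2 := abs_le.1 (abs_mul_le_of_le hD (abs_mul_le_of_le hσ ha3))
  have e3 := abs_le.1 (abs_mul_le_of_le hD ha5)
  have ht4 : t ^ 4 ≤ t ^ 3 / 24 := by nlinarith [pow_nonneg ht0 3]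
  rw [hexp, abs_le]
  constructor <;> linarith

theorem abs_eigenvalue_sub_four_le (h : IsNormalizedMode B D p 2 lam a)
    (hB : |B| ≤ t) (hD : |D| ≤ t ^ 2) (ht : t ≤ 1 / 24) :
    |lam - 4| ≤ 8 * t ^ 2 := by
  have : 0 ≤ t := (abs_nonneg _).trans hB
  have ha2 : a 2 = 1 := h.apply_self
  have hrec := h.recurrence 2
  norm_num [potentialAction, ha2, show a (-2) = p.sign * a 2 from h.neg 2] at hrec
  have ha (n : ℤ) (h1 : n ≠ 2) (h2 : n ≠ -2) : |a n| ≤ 3 * t := h.abs_le_three_mul hB hD ht h1 h2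
  have e1 := abs_le.1 (abs_mul_le_of_le hB (ha 0 (by decide) (by decide)))
  have e2 := abs_le.1 (abs_mul_le_of_le hB (ha 4 (by decide) (by decide)))
  have e3 := abs_le.1 (abs_mul_le_of_le hD p.abs_sign.le)
  have e4 := abs_le.1 (abs_mul_le_of_le hD (ha 6 (by decide) (by decide)))
  rw [abs_le]
  constructor <;> nlinarith

theorem abs_four_mul_apply_zero_sub_le (h : IsNormalizedMode B D p 2 lam a)
    (hB : |B| ≤ t) (hD : |D| ≤ t ^ 2) (ht : t ≤ 1 / 24) :
    |4 * a 0 - (1 + p.sign) * B| ≤ 30 * t ^ 3 := by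
  have ha2 : a 2 = 1 := h.apply_self
  have hrec := h.recurrence 0
  norm_num [potentialAction, ha2, show a (-2) = p.sign * a 2 from h.neg 2,
    show a (-4) = p.sign * a 4 from h.neg 4] at hrec
  have ha (n : ℤ) (h1 : n ≠ 2) (h2 : n ≠ -2) : |a n| ≤ 3 * t := h.abs_le_three_mul hB hD ht h1 h2
  have e1 := abs_le.1 (abs_mul_le_of_le (h.abs_eigenvalue_sub_four_le hB hD ht)
    (ha 0 (by decide) (by decide)))
  have e2 := abs_le.1 (abs_mul_le_of_le hD (ha 4 (by decide) (by decide)))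
  have e3 := abs_le.1 (abs_mul_le_of_le hD
    (abs_mul_le_of_le p.abs_sign.le (ha 4 (by decide) (by decide))))
  rw [abs_le]
  constructor <;> linarith

theorem abs_twelve_mul_apply_four_add_le (h : IsNormalizedMode B D p 2 lam a)
    (hB : |B| ≤ t) (hD : |D| ≤ t ^ 2) (ht : t ≤ 1 / 24) :
    |12 * a 4 + B| ≤ 39 * t ^ 3 := by
  have ha2 : a 2 = 1 := h.apply_self
  have hrec := h.recurrence 4
  norm_num [potentialAction, ha2] at hrec
  have ha (n : ℤ) (h1 : n ≠ 2) (h2 : n ≠ -2) : |a n| ≤ 3 * t := h.abs_le_three_mul hB hD ht h1 h2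
  have ha6 : |a 6| ≤ 9 * t ^ 2 := h.abs_le_nine_mul_sq hB hD ht (by decide)
  have e1 := abs_le.1 (abs_mul_le_of_le (h.abs_eigenvalue_sub_four_le hB hD ht)
    (ha 4 (by decide) (by decide)))
  have e2 := abs_le.1 (abs_mul_le_of_le hB ha6)
  have e3 := abs_le.1 (abs_mul_le_of_le hD (ha 0 (by decide) (by decide)))
  have e4 := abs_le.1 (abs_mul_le_of_le hD (ha 8 (by decide) (by decide)))
  rw [abs_le]
  constructor <;> linarith

theorem abs_eigenvalue_sub_le_of_two (h : IsNormalizedMode B D p 2 lam a)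
    (hB : |B| ≤ t) (hD : |D| ≤ t ^ 2) (ht : t ≤ 1 / 24) :
    |lam - (4 + (1 + p.sign) * B ^ 2 / 4 - B ^ 2 / 12 + p.sign * D)| ≤ 20 * t ^ 4 := by
  have ha2 : a 2 = 1 := h.apply_self
  have hrec := h.recurrence 2
  norm_num [potentialAction, ha2, show a (-2) = p.sign * a 2 from h.neg 2] at hrec
  have ha6 : |a 6| ≤ 9 * t ^ 2 := h.abs_le_nine_mul_sq hB hD ht (by decide)
  have hexp : lam - (4 + (1 + p.sign) * B ^ 2 / 4 - B ^ 2 / 12 + p.sign * D) =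
      B * (12 * a 4 + B) / 12 + B * (4 * a 0 - (1 + p.sign) * B) / 4 + D * a 6 := by
    linear_combination -hrec
  have e1 := abs_le.1 (abs_mul_le_of_le hB (h.abs_twelve_mul_apply_four_add_le hB hD ht))
  have e2 := abs_le.1 (abs_mul_le_of_le hB (h.abs_four_mul_apply_zero_sub_le hB hD ht))
  have e3 := abs_le.1 (abs_mul_le_of_le hD ha6)
  have : 0 ≤ t ^ 4 := by positivity
  rw [hexp, abs_le]
  constructor <;> linarith

end IsNormalizedMode

end Expansion

/-! ### Eigenspaces and their dimension -/

/-- The solutions of `-f'' + v f = λ f` with `f (x + π) = s f x`: the periodic eigenfunctions for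
`s = 1` and the semi-periodic ones for `s = -1`, together with `0`. -/
def hillEigenspace (v : ℝ → ℝ) (s lam : ℝ) : Submodule ℝ (ℝ → ℝ) where
  carrier := {f | ContDiff ℝ 2 f ∧ (∀ x, -(deriv (deriv f) x) + v x * f x = lam * f x) ∧
    ∀ x, f (x + π) = s * f x}
  zero_mem' := ⟨contDiff_const, fun x => by simp [Pi.zero_def], fun x => by simp⟩
  add_mem' := by
    rintro f g ⟨hf, hf_ode, hf_per⟩ ⟨hg, hg_ode, hg_per⟩
    refine ⟨hf.add hg, fun x => ?_, fun x => ?_⟩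
    · have hadd : deriv (f + g) = deriv f + deriv g :=
        funext fun y =>
          deriv_add (hf.differentiable two_ne_zero y) (hg.differentiable two_ne_zero y)
      rw [hadd, deriv_add (hf.differentiable_deriv_two x) (hg.differentiable_deriv_two x)]
      simp only [Pi.add_apply]
      linear_combination hf_ode x + hg_ode x
    · simp only [Pi.add_apply, hf_per, hg_per, mul_add]
  smul_mem' := by
    rintro c f ⟨hf, hf_ode, hf_per⟩
    refine ⟨hf.const_smul c, fun x => ?_, fun x => ?_⟩
    · have hsmul : deriv (c • f) = c • deriv f := funext fun y => deriv_const_smul_field c f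
      rw [hsmul, deriv_const_smul_field]
      simp only [Pi.smul_apply, smul_eq_mul]
      linear_combination c * hf_ode x
    · simp only [Pi.smul_apply, hf_per, smul_eq_mul]
      ring

theorem isPerEF_iff {v : ℝ → ℝ} {lam : ℝ} {f : ℝ → ℝ} :
    IsPerEF v lam f ↔ f ∈ hillEigenspace v 1 lam := by
  change _ ↔ _ ∧ _ ∧ _
  simp only [IsPerEF, one_mul]

theorem isSemiEF_iff {v : ℝ → ℝ} {lam : ℝ} {f : ℝ → ℝ} :
    IsSemiEF v lam f ↔ f ∈ hillEigenspace v (-1) lam := by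
  change _ ↔ _ ∧ _ ∧ _
  simp only [IsSemiEF, neg_one_mul]

theorem perMult_eq_finrank (v : ℝ → ℝ) (lam : ℝ) :
    perMult v lam = Module.finrank ℝ (hillEigenspace v 1 lam) := by
  have hset : {f | IsPerEF v lam f} = hillEigenspace v 1 lam := Set.ext fun _ => isPerEF_iff
  rw [perMult, hset, Submodule.span_eq]

theorem semiMult_eq_finrank (v : ℝ → ℝ) (lam : ℝ) :
    semiMult v lam = Module.finrank ℝ (hillEigenspace v (-1) lam) := by
  have hset : {f | IsSemiEF v lam f} = hillEigenspace v (-1) lam := Set.ext fun _ => isSemiEF_iff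
  rw [semiMult, hset, Submodule.span_eq]

section Functionals

variable {K V : Type*} [Field K] [AddCommGroup V] [Module K V]

open Classical in
theorem finrank_range_functional (L : V →ₗ[K] K) :
    Module.finrank K (LinearMap.range L) = if L = 0 then 0 else 1 := by
  split_ifs with hL
  · rw [hL, LinearMap.range_zero, finrank_bot]
  · rw [LinearMap.range_eq_top.2 (LinearMap.surjective_of_ne_zero hL), finrank_top,
      Module.finrank_self]

open Classical in
theorem finrank_eq_of_separating_functionals (L L' : V →ₗ[K] K)
    (hsep : ∀ x, L x = 0 → L' x = 0 → x = 0) (hL' : L' ≠ 0 → ∃ x, L x = 0 ∧ L' x ≠ 0) :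
    Module.finrank K V = (if L = 0 then 0 else 1) + if L' = 0 then 0 else 1 := by
  have hinj : Function.Injective (L.prod L') := (injective_iff_map_eq_zero _).2 fun x hx =>
    hsep x (congrArg Prod.fst hx) (congrArg Prod.snd hx)
  have : FiniteDimensional K V := .of_injective _ hinj
  have hker : Function.Injective (L'.domRestrict L.ker) :=
    (injective_iff_map_eq_zero _).2 fun x hx => Subtype.ext (hsep x x.2 hx)
  have hzero : L'.domRestrict L.ker = 0 ↔ L' = 0 := by
    refine ⟨fun h => ?_, fun h => by rw [h]; rfl⟩
    by_contra hne
    obtain ⟨x, hx, hx'⟩ := hL' hne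
    exact hx' (LinearMap.congr_fun h ⟨x, hx⟩)
  rw [← L.finrank_range_add_finrank_ker, ← LinearMap.finrank_range_of_inj hker,
    finrank_range_functional, finrank_range_functional]
  simp only [hzero]

end Functionals

section Multiplicity

variable {B D lam : ℝ} {p : Parity} {j : ℤ} {a : ℤ → ℝ} {f : ℝ → ℝ}

theorem neg_one_zpow_mul_neg_one_zpow {n : ℤ} (hn : Odd (n - j)) :
    (-1 : ℝ) ^ j * (-1) ^ n = -1 := by
  rw [← zpow_add₀ (by norm_num), show j + n = n - j + (j + j) by ring]
  exact (hn.add_even (Even.add_self j)).neg_one_zpow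

theorem periodic_two_pi_of_mem_hillEigenspace {v : ℝ → ℝ}
    (hf : f ∈ hillEigenspace v ((-1) ^ j) lam) : Function.Periodic f (2 * π) := fun x => by
  rw [two_mul, ← add_assoc, hf.2.2, hf.2.2, ← mul_assoc, ← zpow_add₀ (by norm_num),
    (Even.add_self j).neg_one_zpow, one_mul]

theorem isMode_phaseCoeff (hf : f ∈ hillEigenspace (twoHarmonic B D) ((-1) ^ j) lam)
    (p : Parity) : IsMode B D p j lam (phaseCoeff p.phase f) where
  neg := phaseCoeff_neg p f
  eq_zero n hn :=
    phaseCoeff_eq_zero_of_add_pi hf.1.continuous hf.2.2 (neg_one_zpow_mul_neg_one_zpow hn) _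
  bounded := exists_abs_phaseCoeff_le hf.1.continuous _
  recurrence n := by
    have hode : deriv (deriv f) = fun x => twoHarmonic B D x * f x + -lam * f x :=
      funext fun x => by linear_combination -(hf.2.1 x)
    have hcoeff :=
      phaseCoeff_deriv_deriv hf.1 (periodic_two_pi_of_mem_hillEigenspace hf) p.phase n
    have hcont := hf.1.continuous
    have hmul : Continuous fun x => twoHarmonic B D x * f x := continuous_twoHarmonic.mul hcont
    rw [hode, phaseCoeff_add hmul (by fun_prop),
      phaseCoeff_twoHarmonic_mul hcont, phaseCoeff_const_mul] at hcoeff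
    linear_combination hcoeff

theorem IsMode.phaseSeries_mem (h : IsMode B D p j lam a) :
    phaseSeries p.phase a ∈ hillEigenspace (twoHarmonic B D) ((-1) ^ j) lam := by
  refine ⟨contDiff_two_phaseSeries h.summable h.summable_sq_mul _, fun x => ?_,
    phaseSeries_add_pi h.eq_zero _⟩
  have hneg : Summable fun n : ℤ => -(n : ℝ) ^ 2 * a n := by
    simpa only [neg_mul] using h.summable_sq_mul.neg
  have hode : potentialAction B D a = fun n => lam * a n + -(n : ℝ) ^ 2 * a n :=
    funext fun n => by linear_combination h.recurrence n
  rw [twoHarmonic_mul_phaseSeries h.summable, hode,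
    phaseSeries_add (h.summable.mul_left lam) hneg, phaseSeries_const_mul,
    deriv_deriv_phaseSeries h.summable h.summable_sq_mul]
  ring

theorem IsNormalizedMode.phaseCoeff_phaseSeries_self (h : IsNormalizedMode B D p j lam a) :
    phaseCoeff p.phase (phaseSeries p.phase a) j = 2 * π := by
  rw [phaseCoeff_phaseSeries h.summable, sub_self, cos_zero, p.cos_phase_add_phase, h.neg,
    h.apply_self]
  linear_combination π * p.sign_mul_self

theorem IsMode.phaseCoeff_other_phaseSeries (h : IsMode B D p j lam a) (n : ℤ) :
    phaseCoeff p.other.phase (phaseSeries p.phase a) n = 0 := by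
  rw [phaseCoeff_phaseSeries h.summable, p.cos_phase_sub_phase_other, p.cos_phase_add_phase_other]
  ring

/-- `phaseCoeff φ · n` as a linear functional on an eigenspace. -/
def phaseCoeffₗ (v : ℝ → ℝ) (s lam φ : ℝ) (n : ℤ) : hillEigenspace v s lam →ₗ[ℝ] ℝ where
  toFun f := phaseCoeff φ f.1 n
  map_add' f g := phaseCoeff_add f.2.1.continuous g.2.1.continuous φ n
  map_smul' c f := phaseCoeff_const_mul c φ f.1 n

theorem phaseCoeffₗ_ne_zero_iff (hres : Nonresonant j lam) (hBD : |B| + |D| ≤ 1 / 12) :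
    phaseCoeffₗ (twoHarmonic B D) ((-1) ^ j) lam p.phase j ≠ 0 ↔ HasMode B D p j lam := by
  refine ⟨fun hL => ?_, fun ⟨a, ha⟩ hL => ?_⟩
  · obtain ⟨f, hf⟩ := DFunLike.ne_iff.1 hL
    exact ⟨_, (isMode_phaseCoeff f.2 p).normalize hres hBD hf⟩
  · have hzero := LinearMap.congr_fun hL ⟨_, ha.phaseSeries_mem⟩
    exact two_pi_pos.ne' (ha.phaseCoeff_phaseSeries_self.symm.trans hzero)

theorem eq_zero_of_mem_hillEigenspace (hf : f ∈ hillEigenspace (twoHarmonic B D) ((-1) ^ j) lam)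
    (hres : Nonresonant j lam) (hBD : |B| + |D| ≤ 1 / 12)
    (h : ∀ p : Parity, phaseCoeff p.phase f j = 0) : f = 0 :=
  eq_zero_of_phaseCoeff_eq_zero hf.1.continuous (periodic_two_pi_of_mem_hillEigenspace hf)
    fun p => (isMode_phaseCoeff hf p).eq_zero_of_apply_self hres hBD (h p)

theorem exists_hasMode_of_ne_zero (hf : f ∈ hillEigenspace (twoHarmonic B D) ((-1) ^ j) lam)
    (hf0 : f ≠ 0) (hres : Nonresonant j lam) (hBD : |B| + |D| ≤ 1 / 12) :
    ∃ p, HasMode B D p j lam := by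
  contrapose! hf0
  refine eq_zero_of_mem_hillEigenspace hf hres hBD fun p => ?_
  by_contra hp
  exact hf0 p ⟨_, (isMode_phaseCoeff hf p).normalize hres hBD hp⟩

open Classical in
theorem finrank_hillEigenspace (hres : Nonresonant j lam) (hBD : |B| + |D| ≤ 1 / 12) :
    Module.finrank ℝ (hillEigenspace (twoHarmonic B D) ((-1) ^ j) lam) =
      (if HasMode B D .even j lam then 1 else 0) + if HasMode B D .odd j lam then 1 else 0 := by
  rw [finrank_eq_of_separating_functionals (phaseCoeffₗ _ _ _ Parity.even.phase j)
    (phaseCoeffₗ _ _ _ Parity.odd.phase j)]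
  · simp only [← phaseCoeffₗ_ne_zero_iff hres hBD, ite_not]
  · exact fun f heven hodd => Subtype.ext <| eq_zero_of_mem_hillEigenspace f.2 hres hBD fun p =>
      p.casesOn heven hodd
  · intro hne
    obtain ⟨a, ha⟩ := (phaseCoeffₗ_ne_zero_iff hres hBD).1 hne
    exact ⟨⟨_, ha.phaseSeries_mem⟩, ha.phaseCoeff_other_phaseSeries j,
      ha.phaseCoeff_phaseSeries_self.trans_ne two_pi_pos.ne'⟩

end Multiplicity

/-! ### Locating the eigenvalues -/

theorem Nonresonant.of_le_two {lam : ℝ} (h : lam ≤ 2) : Nonresonant 0 lam := by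
  rintro n ⟨k, hk⟩ h1 -
  have hn : (2 : ℝ) ≤ |(n : ℝ)| := by exact_mod_cast show 2 ≤ |n| by grind
  exact le_abs.2 (.inl (by nlinarith [sq_abs (n : ℝ)]))

theorem Nonresonant.of_le_five {lam : ℝ} (h : lam ≤ 5) : Nonresonant 1 lam := by
  rintro n ⟨k, hk⟩ h1 h2
  have hn : (3 : ℝ) ≤ |(n : ℝ)| := by exact_mod_cast show 3 ≤ |n| by grind
  exact le_abs.2 (.inl (by nlinarith [sq_abs (n : ℝ)]))

theorem Nonresonant.of_mem_Icc {lam : ℝ} (h : lam ∈ Set.Icc 2 10) : Nonresonant 2 lam := by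
  rintro n ⟨k, hk⟩ h1 h2
  rcases eq_or_ne n 0 with rfl | h0
  · exact le_abs.2 (.inr (by norm_num; linarith [h.1]))
  · have hn : (4 : ℝ) ≤ |(n : ℝ)| := by exact_mod_cast show 4 ≤ |n| by grind
    exact le_abs.2 (.inl (by nlinarith [sq_abs (n : ℝ), h.2]))

section Counting

variable {μ : ℕ → ℝ} {l l₁ l₂ R : ℝ}

theorem apply_one_and_two_of_card_eq_two (hμ : MonotoneOn μ {n | 1 ≤ n}) (hl : l ≤ R)
    (hval : ∀ n, 1 ≤ n → μ n ≤ R → μ n = l)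
    (hcard : Nat.card {n // 1 ≤ n ∧ μ n = l} = 2) : μ 1 = l ∧ μ 2 = l := by
  obtain ⟨⟨m, hm1, hm⟩, ⟨n, hn1, hn⟩, hmn, -⟩ := Nat.card_eq_two_iff.1 hcard
  obtain ⟨k, hk2, hk⟩ : ∃ k, 2 ≤ k ∧ μ k = l := by
    have hne : m ≠ n := fun h => hmn (Subtype.ext h)
    by_cases h : 2 ≤ m
    exacts [⟨m, h, hm⟩, ⟨n, by omega, hn⟩]
  have hle {i : ℕ} (hi1 : 1 ≤ i) (hik : i ≤ k) : μ i = l :=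
    hval i hi1 ((hμ hi1 (hi1.trans hik) hik).trans (hk.trans_le hl))
  exact ⟨hle le_rfl (by omega), hle one_le_two hk2⟩

theorem apply_one_and_two_of_card_eq_one (hμ : MonotoneOn μ {n | 1 ≤ n}) (hlt : l₁ < l₂)
    (hl₂ : l₂ ≤ R) (hval : ∀ n, 1 ≤ n → μ n ≤ R → μ n = l₁ ∨ μ n = l₂)
    (hcard₁ : Nat.card {n // 1 ≤ n ∧ μ n = l₁} = 1)
    (hcard₂ : Nat.card {n // 1 ≤ n ∧ μ n = l₂} = 1) : μ 1 = l₁ ∧ μ 2 = l₂ := by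
  obtain ⟨hsub, ⟨m, hm1, hm⟩⟩ := Nat.card_eq_one_iff_unique.1 hcard₁
  obtain ⟨-, ⟨n, hn1, hn⟩⟩ := Nat.card_eq_one_iff_unique.1 hcard₂
  have hle₁ : μ 1 ≤ l₁ := hm ▸ hμ (le_refl 1) hm1 hm1
  have hone : μ 1 = l₁ := (hval 1 le_rfl (by linarith)).resolve_right (by linarith)
  have hn2 : 2 ≤ n := hn1.lt_of_ne (by rintro rfl; linarith)
  have hle₂ : μ 2 ≤ l₂ := hn ▸ hμ (Nat.le_succ 1) hn1 hn2
  refine ⟨hone, (hval 2 one_le_two (hle₂.trans hl₂)).resolve_left fun htwo => ?_⟩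
  have := congrArg Subtype.val (hsub.elim ⟨1, le_rfl, hone⟩ ⟨2, one_le_two, htwo⟩)
  norm_num at this

theorem sub_eq_abs_sub_of_card (hμ : MonotoneOn μ {n | 1 ≤ n}) (hl₁ : l₁ ≤ R) (hl₂ : l₂ ≤ R)
    (hval : ∀ n, 1 ≤ n → μ n ≤ R → μ n = l₁ ∨ μ n = l₂)
    (hcard : ∀ l, l = l₁ ∨ l = l₂ → Nat.card {n // 1 ≤ n ∧ μ n = l} =
      (if l = l₁ then 1 else 0) + if l = l₂ then 1 else 0) :
    μ 2 - μ 1 = |l₁ - l₂| := by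
  wlog hle : l₁ ≤ l₂ generalizing l₁ l₂
  · rw [abs_sub_comm]
    exact this hl₂ hl₁ (fun n h1 hn => (hval n h1 hn).symm)
      (fun l hl => (hcard l hl.symm).trans (add_comm _ _)) (le_of_not_ge hle)
  have hcard₁ := hcard l₁ (.inl rfl)
  have hcard₂ := hcard l₂ (.inr rfl)
  rcases hle.eq_or_lt with rfl | hlt
  · obtain ⟨hone, htwo⟩ := apply_one_and_two_of_card_eq_two hμ hl₁
      (fun n h1 hn => or_self_iff.1 (hval n h1 hn)) (by simpa using hcard₁)
    rw [hone, htwo, sub_self, abs_zero]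
  · obtain ⟨hone, htwo⟩ := apply_one_and_two_of_card_eq_one hμ hlt hl₂ hval
      (by simpa [hlt.ne] using hcard₁) (by simpa [hlt.ne'] using hcard₂)
    rw [hone, htwo, abs_of_neg (sub_neg.2 hlt), neg_sub]

end Counting

section Gap

variable {B D le lo R : ℝ} {j : ℤ} {μ : ℕ → ℝ}

theorem sub_eq_abs_sub_of_hasMode (hBD : |B| + |D| ≤ 1 / 12) (hj : j ≠ 0)
    (he : HasMode B D .even j le) (ho : HasMode B D .odd j lo)
    (hle : le ≤ R) (hlo : lo ≤ R) (hres : ∀ n, 1 ≤ n → μ n ≤ R → Nonresonant j (μ n))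
    (hrese : Nonresonant j le) (hreso : Nonresonant j lo)
    (hμ : MonotoneOn μ {n | 1 ≤ n})
    (hex : ∀ n, 1 ≤ n → ∃ f ≠ 0, f ∈ hillEigenspace (twoHarmonic B D) ((-1) ^ j) (μ n))
    (hcard : ∀ l, l = le ∨ l = lo → Nat.card {n // 1 ≤ n ∧ μ n = l} =
      Module.finrank ℝ (hillEigenspace (twoHarmonic B D) ((-1) ^ j) l)) :
    μ 2 - μ 1 = |le - lo| := by
  have heven {l : ℝ} : HasMode B D .even j l ↔ l = le :=
    ⟨fun h => (existsUnique_hasMode hBD fun _ => rfl).unique h he, fun h => h ▸ he⟩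
  have hodd {l : ℝ} : HasMode B D .odd j l ↔ l = lo :=
    ⟨fun h => (existsUnique_hasMode hBD fun h0 => absurd h0 hj).unique h ho, fun h => h ▸ ho⟩
  refine sub_eq_abs_sub_of_card hμ hle hlo (fun n h1 hn => ?_) fun l hl => ?_
  · obtain ⟨f, hf0, hf⟩ := hex n h1
    obtain ⟨p, hp⟩ := exists_hasMode_of_ne_zero hf hf0 (hres n h1 hn) hBD
    cases p
    exacts [.inl (heven.1 hp), .inr (hodd.1 hp)]
  · have hresl : Nonresonant j l := by rcases hl with rfl | rfl <;> assumption
    rw [hcard l hl, finrank_hillEigenspace hresl hBD]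
    simp only [heven, hodd]

end Gap

section GapLength

variable {B D t : ℝ} {p : Parity} {lam : ℝ} {j : ℤ} {μ : ℕ → ℝ}

theorem HasMode.mem_Icc (hBD : |B| + |D| ≤ 1 / 12) (h : HasMode B D p j lam) :
    lam ∈ Set.Icc ((j : ℝ) ^ 2 - 1 / 6) ((j : ℝ) ^ 2 + 1 / 6) := by
  obtain ⟨a, ha⟩ := h
  have := abs_le.1 ha.abs_eigenvalue_sub_sq_le
  constructor <;> linarith

theorem not_hasMode_odd_zero : ¬ HasMode B D .odd 0 lam := by
  rintro ⟨a, ha⟩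
  have hneg := ha.neg 0
  rw [neg_zero, ha.apply_self] at hneg
  norm_num [Parity.sign] at hneg

theorem apply_zero_le_two_and_two_lt_of_enumPer (hBD : |B| + |D| ≤ 1 / 12)
    (hP : EnumPer (twoHarmonic B D) μ) : μ 0 ≤ 2 ∧ ∀ n, 1 ≤ n → 2 < μ n := by
  obtain ⟨hmono, hex, hcard⟩ := hP
  obtain ⟨l, hl, huniq⟩ := existsUnique_hasMode (p := .even) (j := 0) hBD fun _ => rfl
  have hl2 : l ≤ 2 := by
    have := (hl.mem_Icc hBD).2
    norm_num at this
    linarith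
  have hlow (n : ℕ) (hn : μ n ≤ 2) : μ n = l := by
    obtain ⟨f, hf0, hf⟩ := hex n
    obtain ⟨p, hp⟩ := exists_hasMode_of_ne_zero (j := 0) (by simpa using isPerEF_iff.1 hf) hf0
      (.of_le_two hn) hBD
    cases p
    exacts [huniq _ hp, absurd hp not_hasMode_odd_zero]
  have hone : Nat.card {n // μ n = l} = 1 := by
    have hfinrank := finrank_hillEigenspace (.of_le_two hl2) hBD
    rw [zpow_zero, if_pos hl, if_neg not_hasMode_odd_zero] at hfinrank
    rw [hcard, perMult_eq_finrank, hfinrank]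
  obtain ⟨hsub, ⟨m, hm⟩⟩ := Nat.card_eq_one_iff_unique.1 hone
  have hzero : μ 0 ≤ 2 := (hmono m.zero_le).trans (hm.trans_le hl2)
  refine ⟨hzero, fun n hn => lt_of_not_ge fun hn2 => ?_⟩
  have : 0 = n := congrArg Subtype.val (hsub.elim ⟨0, hlow 0 hzero⟩ ⟨n, hlow n hn2⟩)
  omega

theorem semiGap_eq_abs_sub {le lo : ℝ} (hBD : |B| + |D| ≤ 1 / 12)
    (he : HasMode B D .even 1 le) (ho : HasMode B D .odd 1 lo)
    (hM : EnumSemi (twoHarmonic B D) μ) : μ 2 - μ 1 = |le - lo| := by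
  obtain ⟨hmono, hex, hcard⟩ := hM
  have hle5 {p : Parity} {l : ℝ} (hl : HasMode B D p 1 l) : l ≤ 5 := by
    have := (hl.mem_Icc hBD).2
    norm_num at this
    linarith
  refine sub_eq_abs_sub_of_hasMode hBD one_ne_zero he ho (hle5 he) (hle5 ho)
    (fun n _ hn => .of_le_five hn) (.of_le_five (hle5 he)) (.of_le_five (hle5 ho)) hmono ?_ ?_
  · simpa only [zpow_one, isSemiEF_iff] using hex
  · intro l _
    rw [hcard, semiMult_eq_finrank, zpow_one]

theorem perGap_eq_abs_sub {le lo : ℝ} (hBD : |B| + |D| ≤ 1 / 12)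
    (he : HasMode B D .even 2 le) (ho : HasMode B D .odd 2 lo)
    (hP : EnumPer (twoHarmonic B D) μ) : μ 2 - μ 1 = |le - lo| := by
  obtain ⟨hzero, hpos⟩ := apply_zero_le_two_and_two_lt_of_enumPer hBD hP
  obtain ⟨hmono, hex, hcard⟩ := hP
  have hmem {p : Parity} {l : ℝ} (hl : HasMode B D p 2 l) : l ∈ Set.Ioc 2 10 := by
    have := hl.mem_Icc hBD
    norm_num at this
    constructor <;> linarith
  have hres {l : ℝ} (hl : l ∈ Set.Ioc 2 10) : Nonresonant 2 l :=
    .of_mem_Icc (Set.Ioc_subset_Icc_self hl)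
  have hsq : (-1 : ℝ) ^ (2 : ℤ) = 1 := by norm_num
  refine sub_eq_abs_sub_of_hasMode hBD two_ne_zero he ho (hmem he).2 (hmem ho).2
    (fun n h1 hn => hres ⟨hpos n h1, hn⟩) (hres (hmem he)) (hres (hmem ho)) (hmono.monotoneOn _)
    ?_ ?_
  · rw [hsq]
    simpa only [isPerEF_iff] using fun n _ => hex n
  · intro l hl
    have hl2 : 2 < l := by rcases hl with rfl | rfl; exacts [(hmem he).1, (hmem ho).1]
    rw [hsq, ← perMult_eq_finrank, ← hcard]
    refine Nat.card_congr (Equiv.subtypeEquivRight fun n => and_iff_right_of_imp ?_)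
    rintro rfl
    exact Nat.one_le_iff_ne_zero.2 fun h => by subst h; linarith

theorem abs_semiGap_sub_le (hB : |B| ≤ t) (hD : |D| ≤ t ^ 2) (ht : t ≤ 1 / 24)
    (hM : EnumSemi (twoHarmonic B D) μ) : |μ 2 - μ 1 - (|2 * B|)| ≤ 10 * t ^ 3 := by
  have hBD : |B| + |D| ≤ 1 / 12 := by nlinarith [abs_nonneg B]
  obtain ⟨le, he, -⟩ := existsUnique_hasMode (p := .even) (j := 1) hBD fun _ => rfl
  obtain ⟨lo, ho, -⟩ := existsUnique_hasMode (p := .odd) (j := 1) hBD (by norm_num)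
  rw [semiGap_eq_abs_sub hBD he ho hM]
  obtain ⟨a, ha⟩ := he
  obtain ⟨b, hb⟩ := ho
  have heven := abs_le.1 (ha.abs_eigenvalue_sub_le_of_one hB hD ht)
  have hodd := abs_le.1 (hb.abs_eigenvalue_sub_le_of_one hB hD ht)
  simp only [Parity.sign] at heven hodd
  refine (abs_abs_sub_abs_le_abs_sub _ _).trans (abs_le.2 ?_)
  constructor <;> linarith

theorem abs_perGap_sub_le (hB : |B| ≤ t) (hD : |D| ≤ t ^ 2) (ht : t ≤ 1 / 24)
    (hP : EnumPer (twoHarmonic B D) μ) : |μ 2 - μ 1 - (|2 * D + B ^ 2 / 2|)| ≤ 40 * t ^ 4 := by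
  have hBD : |B| + |D| ≤ 1 / 12 := by nlinarith [abs_nonneg B]
  obtain ⟨le, he, -⟩ := existsUnique_hasMode (p := .even) (j := 2) hBD fun _ => rfl
  obtain ⟨lo, ho, -⟩ := existsUnique_hasMode (p := .odd) (j := 2) hBD (by norm_num)
  rw [perGap_eq_abs_sub hBD he ho hP]
  obtain ⟨a, ha⟩ := he
  obtain ⟨b, hb⟩ := ho
  have heven := abs_le.1 (ha.abs_eigenvalue_sub_le_of_two hB hD ht)
  have hodd := abs_le.1 (hb.abs_eigenvalue_sub_le_of_two hB hD ht)
  simp only [Parity.sign] at heven hodd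
  refine (abs_abs_sub_abs_le_abs_sub _ _).trans (abs_le.2 ?_)
  constructor <;> linarith

end GapLength

theorem gapLen_one (lamP lamM : ℕ → ℝ) : gapLen lamP lamM 1 = lamM 2 - lamM 1 := by
  simp [gapLen]

theorem gapLen_two (lamP lamM : ℕ → ℝ) : gapLen lamP lamM 2 = lamP 2 - lamP 1 := by
  simp [gapLen, show ¬ Odd 2 by decide]

section Scaling

variable {b c ε : ℝ}

theorem twoHarmonic_scaled (b c ε : ℝ) : twoHarmonic (b * ε / 2) (c * ε ^ 2 / 2) =
    fun x => b * ε * cos (2 * x) + c * ε ^ 2 * cos (4 * x) := by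
  funext x
  unfold twoHarmonic
  ring

theorem abs_coeff_cos_two_le (hε : 0 ≤ ε) : |b * ε / 2| ≤ (|b| + |c| + 1) * ε := by
  rw [abs_div, abs_mul, abs_of_nonneg hε, abs_two, mul_div_right_comm]
  gcongr
  linarith [abs_nonneg b, abs_nonneg c]

theorem abs_coeff_cos_four_le : |c * ε ^ 2 / 2| ≤ ((|b| + |c| + 1) * ε) ^ 2 := by
  rw [abs_div, abs_mul, abs_of_nonneg (sq_nonneg ε), abs_two, mul_div_right_comm, mul_pow]
  gcongr
  nlinarith [abs_nonneg b, abs_nonneg c]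

theorem abs_gapLen_one_sub_le {lamP lamM : ℕ → ℝ} (hε : 0 ≤ ε)
    (hsmall : (|b| + |c| + 1) * ε ≤ 1 / 24)
    (hM : EnumSemi (fun x => b * ε * cos (2 * x) + c * ε ^ 2 * cos (4 * x)) lamM) :
    |gapLen lamP lamM 1 - |b| * ε| ≤ 10 * (|b| + |c| + 1) ^ 3 * ε ^ 3 := by
  rw [← twoHarmonic_scaled] at hM
  have hgap := abs_semiGap_sub_le (abs_coeff_cos_two_le hε) abs_coeff_cos_four_le hsmall hM
  rwa [← gapLen_one lamP, mul_div_cancel₀ _ two_ne_zero, abs_mul, abs_of_nonneg hε, mul_pow,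
    ← mul_assoc] at hgap

theorem abs_gapLen_two_sub_le {lamP lamM : ℕ → ℝ} (hε : 0 ≤ ε)
    (hsmall : (|b| + |c| + 1) * ε ≤ 1 / 24)
    (hP : EnumPer (fun x => b * ε * cos (2 * x) + c * ε ^ 2 * cos (4 * x)) lamP) :
    |gapLen lamP lamM 2 - |c + b ^ 2 / 8| * ε ^ 2| ≤ 40 * (|b| + |c| + 1) ^ 4 * ε ^ 4 := by
  rw [← twoHarmonic_scaled] at hP
  have hgap := abs_perGap_sub_le (abs_coeff_cos_two_le hε) abs_coeff_cos_four_le hsmall hP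
  have hlead : 2 * (c * ε ^ 2 / 2) + (b * ε / 2) ^ 2 / 2 = (c + b ^ 2 / 8) * ε ^ 2 := by ring
  rwa [← gapLen_two _ lamM, hlead, abs_mul, abs_of_nonneg (sq_nonneg ε), mul_pow,
    ← mul_assoc] at hgap

end Scaling

theorem rpow_ofNat_mul {q : ℝ} (hq : 0 < q) (k : ℕ) [k.AtLeastTwo] (m : ℝ) :
    q ^ ((OfNat.ofNat k : ℝ) * m) = (q ^ m) ^ (OfNat.ofNat k : ℕ) := by
  rw [mul_comm, rpow_mul hq.le, rpow_ofNat]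

end Hill

theorem stmt5_general (b c m1 : ℝ) (hm1 : 0 < m1) (lamP lamM : ℝ → ℕ → ℝ)
    (hP : ∀ q : ℝ, 0 < q →
      EnumPer (fun x => b * q ^ m1 * Real.cos (2 * x) + c * q ^ (2 * m1) * Real.cos (4 * x))
        (lamP q))
    (hM : ∀ q : ℝ, 0 < q →
      EnumSemi (fun x => b * q ^ m1 * Real.cos (2 * x) + c * q ^ (2 * m1) * Real.cos (4 * x))
        (lamM q)) :
    ∃ C > 0, ∃ δ > 0, ∀ q : ℝ, 0 < q → q < δ →
      |gapLen (lamP q) (lamM q) 1 - |b| * q ^ m1| ≤ C * q ^ (3 * m1) ∧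
      |gapLen (lamP q) (lamM q) 2 - |c + b ^ 2 / 8| * q ^ (2 * m1)| ≤ C * q ^ (4 * m1) := by
  set K := |b| + |c| + 1
  have hK : 1 ≤ K := by simp only [K, le_add_iff_nonneg_left]; positivity
  refine ⟨40 * K ^ 4, by positivity, (1 / (24 * K)) ^ m1⁻¹, by positivity, fun q hq hqδ => ?_⟩
  have hε : 0 ≤ q ^ m1 := rpow_nonneg hq.le m1
  have hsmall : K * q ^ m1 ≤ 1 / 24 := by
    have hlt : q ^ m1 < 1 / (24 * K) := (lt_rpow_inv_iff_of_pos hq.le (by positivity) hm1).1 hqδ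
    rw [lt_div_iff₀ (by positivity)] at hlt
    linarith
  have hP := hP q hq
  have hM := hM q hq
  simp only [Hill.rpow_ofNat_mul hq] at hP hM ⊢
  refine ⟨(Hill.abs_gapLen_one_sub_le hε hsmall hM).trans ?_,
    Hill.abs_gapLen_two_sub_le hε hsmall hP⟩
  gcongr <;> norm_num

theorem stmt5 (b c m1 : ℝ) (hc : c < 0) (hm1 : 0 < m1)
    (lamP lamM : ℝ → ℕ → ℝ)
    (hP : ∀ q : ℝ, 0 < q →
      EnumPer (fun x => b * q ^ m1 * Real.cos (2 * x) + c * q ^ (2 * m1) * Real.cos (4 * x))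
        (lamP q))
    (hM : ∀ q : ℝ, 0 < q →
      EnumSemi (fun x => b * q ^ m1 * Real.cos (2 * x) + c * q ^ (2 * m1) * Real.cos (4 * x))
        (lamM q)) :
    ∃ C > 0, ∃ δ > 0, ∀ q : ℝ, 0 < q → q < δ →
      |gapLen (lamP q) (lamM q) 1 - |b| * q ^ m1| ≤ C * q ^ (3 * m1) ∧
      |gapLen (lamP q) (lamM q) 2 - |c + b ^ 2 / 8| * q ^ (2 * m1)| ≤ C * q ^ (4 * m1) :=
  stmt5_general b c m1 hm1 lamP lamM hP hM
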